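/- Fix a prime p and positive integers u, d with u ≥ 2 if p = 2, and set Γ = CS(u,d,p) and Γ_i = CS(u+i−1,d,p). For each positive integer i, define Γ*_i = Γ_{⌈log_p i⌉ + 1} (so Γ*_i = CS(u + ⌈log_p i⌉, d, p)). Then {Γ*_i} is an N_p-sequence for Γ: each Γ*_i is a normal subgroup of Γ, Γ*_1 = Γ, the sequence is descending, [Γ*_i, Γ*_j] ⊆ Γ*_{i+j} for all i, j ≥ 1, and the subgroup generated by p-th powers of elements of Γ*_i is contained in Γ*_{ip} for all i ≥ 1. -/

import Mathlib

/-!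
Write elements of `CS(n,d,p)` as `1 + p^n X`.  If `A = 1 + p^a X` and `B = 1 + p^b Y`, then
`AB - BA = p^(a+b) (XY - YX)`, so the commutator `ABA⁻¹B⁻¹ = 1 + (AB - BA) A⁻¹B⁻¹` lies in
`CS(a+b,d,p)` (`comm_mem_CS`).  If `n ≥ 1`, then `A ^ p - 1 = (1 + A + ⋯ + A^(p-1)) (A - 1)`, and
the first factor is congruent to `p`, hence to `0`, modulo `p`, so `A ^ p` lies in `CS(n+1,d,p)`
(`pow_mem_CS`).  The remaining input is arithmetic of `⌈log_p⌉`: it is monotone, goes up by `1` when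
its argument is multiplied by `p`, and since `i + j ≤ p * max i j` this gives
`⌈log_p (i+j)⌉ ≤ ⌈log_p i⌉ + ⌈log_p j⌉ + 1`; the summand `1` is absorbed by `u ≥ 1`.
-/

/-- The reduction homomorphism `GL_d(ℤ_p) →* GL_d(ℤ_p/p^i)` obtained by reducing every
matrix entry modulo `p^i`. -/
noncomputable def csRed (p : ℕ) [Fact p.Prime] (i d : ℕ) :
    (Matrix (Fin d) (Fin d) ℤ_[p])ˣ →*
      (Matrix (Fin d) (Fin d) (ℤ_[p] ⧸ Ideal.span {(p : ℤ_[p]) ^ i}))ˣ :=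
  Units.map
    (RingHom.toMonoidHom
      (RingHom.mapMatrix (Ideal.Quotient.mk (Ideal.span {(p : ℤ_[p]) ^ i}))))

/-- The congruence subgroup `CS(i,d,p)`: the subgroup of `GL_d(ℤ_p)` consisting of the
matrices congruent to the identity modulo `p^i`, i.e. the kernel of reduction mod `p^i`. -/
noncomputable def CS (p : ℕ) [Fact p.Prime] (i d : ℕ) :
    Subgroup (Matrix (Fin d) (Fin d) ℤ_[p])ˣ :=
  (csRed p i d).ker


/-- `Γ*_i = CS(u + ⌈log_p i⌉, d, p)`, the renumbered congruence subgroup sequence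
(`Nat.clog p i` is the ceiling of the base-`p` logarithm of `i`). -/
noncomputable def csStar (p : ℕ) [Fact p.Prime] (u d i : ℕ) :
    Subgroup (Matrix (Fin d) (Fin d) ℤ_[p])ˣ :=
  CS p (u + Nat.clog p i) d

/-- Membership in `CS(n,d,p)` as an explicit expansion `A = 1 + p^n X`; the scalar `p^n` is
written as a cast into the matrix ring, where it is central. -/
theorem mem_CS_iff (p : ℕ) [Fact p.Prime] (n d : ℕ) (A : (Matrix (Fin d) (Fin d) ℤ_[p])ˣ) :
    A ∈ CS p n d ↔ ∃ X : Matrix (Fin d) (Fin d) ℤ_[p],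
      (A : Matrix (Fin d) (Fin d) ℤ_[p]) - 1 = ((p ^ n : ℕ) : Matrix (Fin d) (Fin d) ℤ_[p]) * X := by
  have hred : A ∈ CS p n d ↔ RingHom.mapMatrix (Ideal.Quotient.mk (Ideal.span {(p : ℤ_[p]) ^ n}))
      ((A : Matrix (Fin d) (Fin d) ℤ_[p]) - 1) = 0 := by
    rw [map_sub, map_one, sub_eq_zero, CS, MonoidHom.mem_ker, Units.ext_iff]
    rfl
  have hmul : ∀ X : Matrix (Fin d) (Fin d) ℤ_[p],
      ((p ^ n : ℕ) : Matrix (Fin d) (Fin d) ℤ_[p]) * X = ((p : ℤ_[p]) ^ n) • X := by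
    intro X
    rw [← nsmul_eq_mul, ← Nat.cast_smul_eq_nsmul ℤ_[p], Nat.cast_pow]
  simp only [hred, hmul]
  constructor
  · intro h
    have hdvd : ∀ r s, ∃ x, ((A : Matrix (Fin d) (Fin d) ℤ_[p]) - 1) r s = (p : ℤ_[p]) ^ n * x := by
      intro r s
      have hrs := congrFun (congrFun h r) s
      exact Ideal.mem_span_singleton'.mp (Ideal.Quotient.eq_zero_iff_mem.mp hrs) |>.imp
        fun x hx => by rw [mul_comm]; exact hx.symm
    choose X hX using hdvd
    exact ⟨X, by ext r s; rw [hX]; rfl⟩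
  · rintro ⟨X, hX⟩
    rw [hX]
    ext r s
    exact Ideal.Quotient.eq_zero_iff_mem.mpr
      (Ideal.mem_span_singleton.mpr ⟨X r s, rfl⟩)

theorem CS_antitone (p : ℕ) [Fact p.Prime] (d : ℕ) {m n : ℕ} (h : m ≤ n) :
    CS p n d ≤ CS p m d := by
  intro A hA
  obtain ⟨X, hX⟩ := (mem_CS_iff p n d A).mp hA
  refine (mem_CS_iff p m d A).mpr ⟨((p ^ (n - m) : ℕ) : Matrix (Fin d) (Fin d) ℤ_[p]) * X, ?_⟩
  rw [hX, ← mul_assoc, ← Nat.cast_mul, ← pow_add, Nat.add_sub_cancel' h]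

theorem comm_mem_CS (p : ℕ) [Fact p.Prime] (d a b : ℕ) {A B : (Matrix (Fin d) (Fin d) ℤ_[p])ˣ}
    (hA : A ∈ CS p a d) (hB : B ∈ CS p b d) : A * B * A⁻¹ * B⁻¹ ∈ CS p (a + b) d := by
  obtain ⟨X, hX⟩ := (mem_CS_iff p a d A).mp hA
  obtain ⟨Y, hY⟩ := (mem_CS_iff p b d B).mp hB
  refine (mem_CS_iff p (a + b) d _).mpr
    ⟨(X * Y - Y * X) * ((A⁻¹ * B⁻¹ : (Matrix (Fin d) (Fin d) ℤ_[p])ˣ) : Matrix _ _ _), ?_⟩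
  have hcomm : (A : Matrix (Fin d) (Fin d) ℤ_[p]) * B - B * A =
      ((p ^ (a + b) : ℕ) : Matrix (Fin d) (Fin d) ℤ_[p]) * (X * Y - Y * X) := by
    calc (A : Matrix (Fin d) (Fin d) ℤ_[p]) * B - B * A
        = (A - 1 : Matrix (Fin d) (Fin d) ℤ_[p]) * (B - 1) - (B - 1) * (A - 1) := by noncomm_ring
      _ = _ := by
        rw [hX, hY, pow_add, Nat.cast_mul, mul_sub]
        congr 1
        · rw [mul_assoc, ← mul_assoc X, ← (Nat.cast_commute (p ^ b) X).eq]
          simp only [mul_assoc]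
        · rw [mul_assoc, ← mul_assoc Y, ← (Nat.cast_commute (p ^ a) Y).eq,
            (Nat.cast_commute (p ^ a) (((p ^ b : ℕ) : Matrix (Fin d) (Fin d) ℤ_[p]))).eq]
          simp only [mul_assoc]
  rw [← mul_assoc, ← hcomm, sub_mul]
  congr 1
  · rw [← Units.val_mul, ← Units.val_mul]
    simp only [mul_assoc]
  · rw [← Units.val_mul, ← Units.val_mul, ← Units.val_one]
    congr 1
    group

theorem pow_mem_CS (p : ℕ) [Fact p.Prime] (d n : ℕ) (hn : 1 ≤ n)
    {A : (Matrix (Fin d) (Fin d) ℤ_[p])ˣ} (hA : A ∈ CS p n d) : A ^ p ∈ CS p (n + 1) d := by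
  obtain ⟨X, hX⟩ := (mem_CS_iff p n d A).mp hA
  -- Every power of `A` is `1` modulo `p`, so the geometric sum is `p` modulo `p`.
  have hpow : ∀ k : ℕ, ∃ Y : Matrix (Fin d) (Fin d) ℤ_[p],
      (A : Matrix (Fin d) (Fin d) ℤ_[p]) ^ k - 1 = (p : Matrix (Fin d) (Fin d) ℤ_[p]) * Y := by
    intro k
    obtain ⟨Y, hY⟩ := (mem_CS_iff p 1 d (A ^ k)).mp
      (Subgroup.pow_mem _ (CS_antitone p d hn hA) k)
    exact ⟨Y, by simpa using hY⟩
  choose Y hY using hpow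
  have hsum : ∑ k ∈ Finset.range p, (A : Matrix (Fin d) (Fin d) ℤ_[p]) ^ k =
      (p : Matrix (Fin d) (Fin d) ℤ_[p]) * (∑ k ∈ Finset.range p, Y k + 1) := by
    rw [mul_add, Finset.mul_sum, mul_one, ← Finset.sum_congr rfl fun k _ => hY k,
      Finset.sum_sub_distrib]
    simp
  refine (mem_CS_iff p (n + 1) d _).mpr ⟨(∑ k ∈ Finset.range p, Y k + 1) * X, ?_⟩
  rw [Units.val_pow_eq_pow_val, ← geom_sum_mul, hsum, hX, pow_succ', Nat.cast_mul, mul_assoc,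
    mul_assoc, ← mul_assoc _ _ X, ← (Nat.cast_commute (p ^ n) _).eq, mul_assoc]

theorem clog_mul_base (p : ℕ) (hp : 1 < p) (i : ℕ) (hi : 1 ≤ i) :
    Nat.clog p (i * p) = Nat.clog p i + 1 := by
  apply eq_of_forall_ge_iff
  intro c
  rw [Nat.clog_le_iff_le_pow hp]
  cases c with
  | zero =>
    have : p ≤ i * p := Nat.le_mul_of_pos_left p hi
    simp only [pow_zero]
    omega
  | succ c =>
    rw [pow_succ, Nat.mul_le_mul_right_iff (by omega), Nat.add_le_add_iff_right,
      Nat.clog_le_iff_le_pow hp]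

theorem clog_add_le (p : ℕ) (hp : 1 < p) (i j : ℕ) (hi : 1 ≤ i) :
    Nat.clog p (i + j) ≤ Nat.clog p i + Nat.clog p j + 1 := by
  have hle : i + j ≤ max i j * p := by nlinarith [le_max_left i j, le_max_right i j]
  have h := Nat.clog_mono_right p hle
  rw [clog_mul_base p hp _ (le_max_of_le_left hi)] at h
  rcases max_choice i j with hm | hm <;> rw [hm] at h <;> omega


/-- The sequence `Γ*_i = Γ_{⌈log_p i⌉+1}` is an `N_p`-sequence for `Γ = CS(u,d,p)`:
each `Γ*_i` is a normal subgroup of `Γ`, `Γ*_1 = Γ`, the sequence is descending,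
`[Γ*_i, Γ*_j] ⊆ Γ*_{i+j}`, and `(Γ*_i)^p ⊆ Γ*_{ip}`. -/
theorem csStar_isNpSequence
    (p : ℕ) [Fact p.Prime] (u d : ℕ) (hu : 0 < u) (hd : 0 < d) (h2 : p = 2 → 2 ≤ u) :
    (∀ i : ℕ, 1 ≤ i → csStar p u d i ≤ CS p u d ∧
        ((csStar p u d i).subgroupOf (CS p u d)).Normal) ∧
    csStar p u d 1 = CS p u d ∧
    (∀ i : ℕ, 1 ≤ i → csStar p u d (i + 1) ≤ csStar p u d i) ∧
    (∀ i j : ℕ, 1 ≤ i → 1 ≤ j →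
        ∀ A ∈ csStar p u d i, ∀ B ∈ csStar p u d j,
          A * B * A⁻¹ * B⁻¹ ∈ csStar p u d (i + j)) ∧
    (∀ i : ℕ, 1 ≤ i →
        Subgroup.closure {x | ∃ A ∈ csStar p u d i, A ^ p = x} ≤ csStar p u d (i * p)) := by
  have hp : 1 < p := (Fact.out : p.Prime).one_lt
  refine ⟨fun i _ => ⟨CS_antitone p d (Nat.le_add_right _ _), ?_⟩, ?_, fun i _ => ?_, ?_, ?_⟩
  · have : (csStar p u d i).Normal := MonoidHom.normal_ker _
    exact Subgroup.normal_subgroupOf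
  · simp [csStar]
  · exact CS_antitone p d (Nat.add_le_add_left (Nat.clog_mono_right p (Nat.le_succ i)) u)
  · intro i j hi _ A hA B hB
    refine CS_antitone p d ?_ (comm_mem_CS p d _ _ hA hB)
    have := clog_add_le p hp i j hi
    omega
  · intro i hi
    rw [Subgroup.closure_le]
    rintro _ ⟨A, hA, rfl⟩
    rw [SetLike.mem_coe, csStar, clog_mul_base p hp i hi, ← add_assoc]
    exact pow_mem_CS p d _ (by omega) hA
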